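/- Let x : [0,1] → ℝ be a continuous function with x(0) = x(1) = 0. Then for every n ∈ ℕ, V_n^{(2)}(x) = 2^{−n} s_n², where s_n := (Σ_{m=0}^{n−1} Σ_{k=0}^{2^m−1} θ_{m,k}²)^{1/2}. -/

import Mathlib

/-!
On a dyadic interval of level `n` with endpoint values `a`, `c` and midpoint value `b`, the
parallelogram identity gives
`(b - a)² + (c - b)² = ((c - a)² + (2b - a - c)²) / 2`, and `2 ^ n (2b - a - c)²` is the squared
Faber–Schauder coefficient of that interval. Summing over the intervals shows that
`2 ^ n V_n` grows by `∑ k, θ_{n,k}²` from level `n` to level `n + 1` (`dyadicVar_two_succ`).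
Since `V_0 = (x 1 - x 0)² = 0`, telescoping yields `2 ^ n V_n = s_n²`.
-/

open Filter Finset

noncomputable section

/-- Faber–Schauder coefficient `θ_{m,k}` of `x`. -/
def fsCoeff (x : ℝ → ℝ) (m k : ℕ) : ℝ :=
  2 ^ ((m : ℝ) / 2) *
    (2 * x ((2 * (k : ℝ) + 1) / 2 ^ (m + 1)) - x ((k : ℝ) / 2 ^ m) - x (((k : ℝ) + 1) / 2 ^ m))

/-- `s_n = (∑_{m<n} ∑_{k<2^m} θ_{m,k}²)^{1/2}`. -/
def sSeq (x : ℝ → ℝ) (n : ℕ) : ℝ :=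
  Real.sqrt (∑ m ∈ Finset.range n, ∑ k ∈ Finset.range (2 ^ m), fsCoeff x m k ^ 2)

/-- The `n`-th dyadic `p`-th variation of `x`. -/
def dyadicVar (x : ℝ → ℝ) (p : ℝ) (n : ℕ) : ℝ :=
  ∑ k ∈ Finset.range (2 ^ n), |x (((k : ℝ) + 1) / 2 ^ n) - x ((k : ℝ) / 2 ^ n)| ^ p

theorem sum_range_two_mul_pairs (f : ℕ → ℝ) (N : ℕ) :
    ∑ k ∈ Finset.range (2 * N), f k = ∑ k ∈ Finset.range N, (f (2 * k) + f (2 * k + 1)) := by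
  induction N with
  | zero => simp
  | succ N ih =>
    rw [show 2 * (N + 1) = 2 * N + 1 + 1 by ring, Finset.sum_range_succ, Finset.sum_range_succ,
      Finset.sum_range_succ, ih, add_assoc]

theorem dyadicVar_two (x : ℝ → ℝ) (n : ℕ) :
    dyadicVar x 2 n =
      ∑ k ∈ Finset.range (2 ^ n), (x (((k : ℝ) + 1) / 2 ^ n) - x ((k : ℝ) / 2 ^ n)) ^ 2 := by
  simp [dyadicVar]

theorem fsCoeff_sq (x : ℝ → ℝ) (m k : ℕ) :
    fsCoeff x m k ^ 2 = 2 ^ m *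
      (2 * x ((2 * (k : ℝ) + 1) / 2 ^ (m + 1)) - x ((k : ℝ) / 2 ^ m)
        - x (((k : ℝ) + 1) / 2 ^ m)) ^ 2 := by
  have h : ((2 : ℝ) ^ ((m : ℝ) / 2)) ^ 2 = 2 ^ m := by
    rw [← Real.rpow_natCast, ← Real.rpow_mul (by norm_num), ← Real.rpow_natCast]
    congr 1
    push_cast
    ring
  rw [fsCoeff, mul_pow, h]

/-- The parallelogram identity summed over all dyadic intervals of level `n`. -/
theorem dyadicVar_two_succ (x : ℝ → ℝ) (n : ℕ) :
    2 ^ (n + 1) * dyadicVar x 2 (n + 1) =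
      2 ^ n * dyadicVar x 2 n + ∑ k ∈ Finset.range (2 ^ n), fsCoeff x n k ^ 2 := by
  rw [dyadicVar_two, dyadicVar_two, pow_succ' (2 : ℕ) n, sum_range_two_mul_pairs, Finset.mul_sum,
    Finset.mul_sum, ← Finset.sum_add_distrib]
  refine Finset.sum_congr rfl fun k _ => ?_
  have hleft : ((2 * k : ℕ) : ℝ) / 2 ^ (n + 1) = (k : ℝ) / 2 ^ n := by
    push_cast
    rw [pow_succ]
    field_simp
  have hright : (((2 * k + 1 : ℕ) : ℝ) + 1) / 2 ^ (n + 1) = ((k : ℝ) + 1) / 2 ^ n := by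
    push_cast
    rw [pow_succ]
    field_simp
    ring
  rw [fsCoeff_sq, hleft, hright]
  push_cast
  ring

theorem two_pow_mul_dyadicVar (x : ℝ → ℝ) (h0 : x 0 = 0) (h1 : x 1 = 0) (n : ℕ) :
    2 ^ n * dyadicVar x 2 n =
      ∑ m ∈ Finset.range n, ∑ k ∈ Finset.range (2 ^ m), fsCoeff x m k ^ 2 := by
  induction n with
  | zero => simp [dyadicVar_two, h0, h1]
  | succ n ih => rw [dyadicVar_two_succ, ih, Finset.sum_range_succ]

theorem stmt14 (x : ℝ → ℝ) (hx : ContinuousOn x (Set.Icc 0 1))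
    (h0 : x 0 = 0) (h1 : x 1 = 0) (n : ℕ) (hn : 1 ≤ n) :
    dyadicVar x 2 n = sSeq x n ^ 2 / 2 ^ n := by
  rw [sSeq, Real.sq_sqrt (Finset.sum_nonneg fun _ _ => Finset.sum_nonneg fun _ _ => sq_nonneg _),
    ← two_pow_mul_dyadicVar x h0 h1]
  field_simp
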